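/- Let R₀ > 0, δ ∈ ℝ, k ∈ ℕ with k ≥ 2, and 0 ≤ β ≤ 1, and define f(θ) = β cos(kθ) + √(1−β²) sin(kθ) and R_δ(θ) = R₀(1 + δ f(θ)). Then both first moments of the enclosed region vanish: ∫₀^{2π} R_δ(θ)³ cos(θ) dθ = 0 and ∫₀^{2π} R_δ(θ)³ sin(θ) dθ = 0. Hence the barycenter of the region enclosed by the polar curve r = R_δ(θ) is located at the origin. -/

import Mathlib

/-!
Rotating a polar curve `r = R(θ)` by `2π/k` multiplies its first moment `∫ R³ e^{iθ}` by the
primitive root of unity `e^{2πi/k}`. If the curve is invariant under this rotation, the moment is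
fixed as well; for `k ≥ 2` the root differs from `1`, so the moment vanishes. In the same way, every
Fourier coefficient of a `2π/k`-periodic function vanishes unless `k` divides its index.
-/

section

open Function MeasureTheory Real

theorem integral_eq_zero_of_periodic_of_add_eq_smul {𝕜 E : Type*} [NormedDivisionRing 𝕜]
    [NormedAddCommGroup E] [NormedSpace ℝ E] [Module 𝕜 E] [NormSMulClass 𝕜 E]
    [SMulCommClass ℝ 𝕜 E] {g : ℝ → E} {T p : ℝ} {c : 𝕜} (hT : Periodic g T)
    (hp : ∀ x, g (x + p) = c • g x) (hc : c ≠ 1) (a : ℝ) : ∫ x in a..a + T, g x = 0 := by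
  have smul_integral : c • ∫ x in a..a + T, g x = ∫ x in a..a + T, g x :=
    calc
      c • ∫ x in a..a + T, g x = ∫ x in a..a + T, g (x + p) := by
        simp only [hp, intervalIntegral.integral_smul]
      _ = ∫ x in (a + p)..(a + p) + T, g x := by
        rw [intervalIntegral.integral_comp_add_right, add_right_comm]
      _ = ∫ x in a..a + T, g x := hT.intervalIntegral_add_eq _ _
  refine (smul_eq_zero_iff_right (sub_ne_zero.mpr hc)).mp ?_
  rw [sub_smul, one_smul, smul_integral, sub_self]

theorem integral_exp_smul_eq_zero_of_periodic_of_not_dvd {E : Type*} [NormedAddCommGroup E]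
    [NormedSpace ℂ E] {f : ℝ → E} {k : ℕ} {n : ℤ} (hk : k ≠ 0)
    (hf : Periodic f (2 * π / k)) (hn : ¬ (k : ℤ) ∣ n) :
    ∫ θ in (0 : ℝ)..(2 * π), Complex.exp ((n * θ : ℝ) * Complex.I) • f θ = 0 := by
  have hf_two_pi : Periodic f (2 * π) := by
    simpa only [mul_div_cancel₀ _ (Nat.cast_ne_zero.mpr hk : (k : ℝ) ≠ 0)] using hf.nat_mul k
  have smul_periodic :
      Periodic (fun θ : ℝ ↦ Complex.exp ((n * θ : ℝ) * Complex.I) • f θ) (2 * π) := fun θ ↦ by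
    dsimp only
    rw [hf_two_pi θ, mul_add, Complex.ofReal_add, add_mul, Complex.exp_add]
    push_cast
    rw [mul_assoc (n : ℂ) (2 * π), Complex.exp_int_mul_two_pi_mul_I, mul_one]
  have root_ne_one : Complex.exp (2 * π * Complex.I / k) ^ n ≠ 1 := fun h ↦
    hn (((Complex.isPrimitiveRoot_exp k hk).zpow_eq_one_iff_dvd n).mp h)
  have rotate (θ : ℝ) :
      Complex.exp ((n * (θ + 2 * π / k) : ℝ) * Complex.I) • f (θ + 2 * π / k) =
        Complex.exp (2 * π * Complex.I / k) ^ n •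
          Complex.exp ((n * θ : ℝ) * Complex.I) • f θ := by
    rw [hf θ, smul_smul, ← Complex.exp_int_mul, ← Complex.exp_add]
    push_cast
    ring_nf
  simpa only [zero_add] using
    integral_eq_zero_of_periodic_of_add_eq_smul smul_periodic rotate root_ne_one 0

theorem integral_mul_cos_sin_eq_zero_of_periodic_of_not_dvd {f : ℝ → ℝ} {k : ℕ} {n : ℤ} (hk : k ≠ 0)
    (hf : Periodic f (2 * π / k)) (hn : ¬ (k : ℤ) ∣ n)
    (hf_int : IntervalIntegrable f volume 0 (2 * π)) :
    (∫ θ in (0 : ℝ)..(2 * π), f θ * cos (n * θ) = 0) ∧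
      ∫ θ in (0 : ℝ)..(2 * π), f θ * sin (n * θ) = 0 := by
  let g (θ : ℝ) : ℂ := Complex.exp ((n * θ : ℝ) * Complex.I) * f θ
  have g_integrable : IntervalIntegrable g volume 0 (2 * π) :=
    IntervalIntegrable.continuousOn_mul ⟨hf_int.1.ofReal, hf_int.2.ofReal⟩ (by fun_prop)
  have g_integral : ∫ θ in (0 : ℝ)..(2 * π), g θ = 0 :=
    integral_exp_smul_eq_zero_of_periodic_of_not_dvd hk (hf.comp Complex.ofReal) hn
  have g_re (θ : ℝ) : (g θ).re = f θ * cos (n * θ) := by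
    rw [Complex.re_mul_ofReal, Complex.exp_ofReal_mul_I_re, mul_comm]
  have g_im (θ : ℝ) : (g θ).im = f θ * sin (n * θ) := by
    rw [Complex.im_mul_ofReal, Complex.exp_ofReal_mul_I_im, mul_comm]
  constructor
  · simpa only [RCLike.re_to_complex, g_re, g_integral, Complex.zero_re] using
      intervalIntegral.intervalIntegral_re g_integrable
  · simpa only [RCLike.im_to_complex, g_im, g_integral, Complex.zero_im] using
      intervalIntegral.intervalIntegral_im g_integrable

theorem periodic_comp_cos_sin_mul {α : Type*} (G : ℝ → ℝ → α) (a : ℝ) :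
    Periodic (fun θ ↦ G (cos (a * θ)) (sin (a * θ))) (2 * π / a) := by
  have periodic : Periodic (fun φ ↦ G (cos φ) (sin φ)) (2 * π) := fun φ ↦ by
    simp only [cos_add_two_pi, sin_add_two_pi]
  simpa only [div_eq_inv_mul] using periodic.const_mul a

theorem perturbed_droplet_barycenter_general {R : ℝ → ℝ} {k : ℕ} (hk : 2 ≤ k)
    (hR : Periodic R (2 * π / k))
    (hR_int : IntervalIntegrable (fun θ ↦ R θ ^ 3) volume 0 (2 * π)) :
    (∫ θ in (0 : ℝ)..(2 * π), R θ ^ 3 * cos θ = 0) ∧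
      ∫ θ in (0 : ℝ)..(2 * π), R θ ^ 3 * sin θ = 0 := by
  have not_dvd_one : ¬ (k : ℤ) ∣ 1 := by
    rw [Int.natCast_dvd_ofNat, Nat.dvd_one]
    lia
  simpa only [Int.cast_one, one_mul] using
    integral_mul_cos_sin_eq_zero_of_periodic_of_not_dvd (by lia)
      (fun θ ↦ congrArg (· ^ 3) (hR θ)) not_dvd_one hR_int

end

open Real in
/-- For the perturbed droplet interface
`R_δ(θ) = R₀ (1 + δ (β cos(kθ) + √(1−β²) sin(kθ)))` with `k ≥ 2` and `0 ≤ β ≤ 1`, both first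
moments of the enclosed region vanish: `∫₀^{2π} R_δ³ cos θ dθ = 0` and
`∫₀^{2π} R_δ³ sin θ dθ = 0`; hence the barycenter of the enclosed region is at the origin. -/
theorem perturbed_droplet_barycenter
    (R₀ δ β : ℝ) (hR₀ : 0 < R₀) (k : ℕ) (hk : 2 ≤ k)
    (hβ0 : 0 ≤ β) (hβ1 : β ≤ 1) :
    (∫ θ in (0 : ℝ)..(2 * π),
        (R₀ * (1 + δ * (β * cos (k * θ) + Real.sqrt (1 - β ^ 2) * sin (k * θ)))) ^ 3 * cos θ
      = 0)
    ∧ (∫ θ in (0 : ℝ)..(2 * π),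
        (R₀ * (1 + δ * (β * cos (k * θ) + Real.sqrt (1 - β ^ 2) * sin (k * θ)))) ^ 3 * sin θ
      = 0) := by
  exact perturbed_droplet_barycenter_general hk
    (periodic_comp_cos_sin_mul (fun c s ↦ R₀ * (1 + δ * (β * c + Real.sqrt (1 - β ^ 2) * s))) k)
    (Continuous.intervalIntegrable (by fun_prop) _ _)
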